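/- Let A be an Artinian Gorenstein local K-algebra with Hilbert function {1,2,2,1}. Then A is isomorphic as a K-algebra to exactly one of the following quotients of R = K[[x_1,x_2]]: (a) R/(x_1^3, x_2^2), or (b) R/(x_1 x_2, x_1^3 − x_2^3); in particular these two rings are not isomorphic to each other. -/

import Mathlib

/-- The Hilbert function
`HF_A(i) = dim_K (m^i/m^(i+1)) = dim_K A/m^(i+1) - dim_K A/m^i`
of a local `K`-algebra `A` with maximal ideal `m`. -/
noncomputable def hilbLoc (K : Type*) [Field K] (A : Type*) [CommRing A] [IsLocalRing A]
    [Algebra K A] (i : ℕ) : ℕ :=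
  Module.finrank K (A ⧸ (IsLocalRing.maximalIdeal A ^ (i + 1))) -
    Module.finrank K (A ⧸ (IsLocalRing.maximalIdeal A ^ i))

/-- `dim_K` of the socle `(0 : m)` of a local `K`-algebra `A`;
an Artinian local ring `A` is Gorenstein iff this equals `1`. -/
noncomputable def socDimLoc (K : Type*) [Field K] (A : Type*) [CommRing A] [IsLocalRing A]
    [Algebra K A] : ℕ :=
  Module.finrank K
    ((Submodule.colon (⊥ : Ideal A) (IsLocalRing.maximalIdeal A)).restrictScalars K)

/-- The residue field of the local `K`-algebra `A` is `K` itself,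
via the structure map. -/
def residueFieldIsK (K : Type*) [Field K] (A : Type*) [CommRing A] [IsLocalRing A]
    [Algebra K A] : Prop :=
  Function.Bijective (algebraMap K (IsLocalRing.ResidueField A))

/-- The variable `x_i` of `R = K[[x_1,…,x_n]]`. -/
noncomputable def psX {K : Type*} [Field K] {n : ℕ} (i : Fin n) :
    MvPowerSeries (Fin n) K := MvPowerSeries.X i

/-!
Let `m` be the maximal ideal of `A`. As `m ^ 2 / m ^ 3` has dimension two, the products `x ^ 2`,
`x * y`, `y ^ 2` of generators `x`, `y` of `m` are linearly dependent modulo `m ^ 3`. The resulting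
quadratic form splits into linear factors, so after a linear change of generators `x * y` or `y ^ 2`
lies in `m ^ 3`. By the Gorenstein condition the line `m ^ 3` is the whole socle, which forces it to
be spanned by `x ^ 3` and by `y ^ 3` in the first case, and by `x ^ 2 * y` in the second. Rescaling
`x` and adding multiples of `x` to `y` and of `y` to `x` then absorbs the error terms and yields
generators with `x * y = 0` and `x ^ 3 = y ^ 3`, or with `x ^ 3 = y ^ 2 = 0`. Since `A` and both
quotients of the power series ring have dimension six, these relations already present `A`.
-/

open IsLocalRing

section Generators

variable {R B : Type*} [CommRing R] [CommRing B] [Algebra R B]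

theorem exists_mem_adjoin_sub_mem_span_pow {s : Set B}
    (hres : ∀ b : B, ∃ r : R, b - algebraMap R B r ∈ Ideal.span s) (n : ℕ) (b : B) :
    ∃ a ∈ Algebra.adjoin R s, b - a ∈ Ideal.span s ^ n := by
  induction n generalizing b with
  | zero => exact ⟨0, zero_mem _, by simp⟩
  | succ n ih =>
    have approx_mul : ∀ t ∈ Ideal.span s, ∀ b : B,
        ∃ a ∈ Algebra.adjoin R s, b * t - a ∈ Ideal.span s ^ (n + 1) := by
      intro t ht
      induction ht using Submodule.span_induction with
      | mem t ht =>
        intro b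
        obtain ⟨a, ha, hba⟩ := ih b
        refine ⟨a * t, mul_mem ha (Algebra.subset_adjoin ht), ?_⟩
        rw [← sub_mul, pow_succ]
        exact Ideal.mul_mem_mul hba (Ideal.subset_span ht)
      | zero => exact fun b => ⟨0, zero_mem _, by simp⟩
      | add t u _ _ iht ihu =>
        intro b
        obtain ⟨a, ha, hta⟩ := iht b
        obtain ⟨a', ha', hua⟩ := ihu b
        refine ⟨a + a', add_mem ha ha', ?_⟩
        rw [mul_add, add_sub_add_comm]
        exact add_mem hta hua
      | smul c t _ iht =>
        intro b
        simpa only [smul_eq_mul, mul_assoc] using iht (b * c)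
    obtain ⟨r, hr⟩ := hres b
    obtain ⟨a, ha, hba⟩ := approx_mul _ hr 1
    exact ⟨algebraMap R B r + a, add_mem (Subalgebra.algebraMap_mem _ r) ha,
      by rwa [one_mul, sub_sub] at hba⟩

theorem adjoin_eq_top_of_isNilpotent_span {s : Set B} (hs : IsNilpotent (Ideal.span s))
    (hres : ∀ b : B, ∃ r : R, b - algebraMap R B r ∈ Ideal.span s) :
    Algebra.adjoin R s = ⊤ := by
  obtain ⟨n, hn⟩ := hs
  refine Algebra.eq_top_iff.2 fun b => ?_
  obtain ⟨a, ha, hba⟩ := exists_mem_adjoin_sub_mem_span_pow hres n b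
  rw [hn, Ideal.zero_eq_bot, Ideal.mem_bot, sub_eq_zero] at hba
  rwa [hba]

theorem finite_and_finrank_le_card_of_closure_subset {K : Type*} [Field K] [Algebra K B]
    {s : Set B} {t : Finset B} (hs : Algebra.adjoin K s = ⊤)
    (ht : ∀ b ∈ Submonoid.closure s, b = 0 ∨ b ∈ t) :
    Module.Finite K B ∧ Module.finrank K B ≤ t.card := by
  have span_eq_top : Submodule.span K (t : Set B) = ⊤ := by
    rw [eq_top_iff, ← Algebra.top_toSubmodule, ← hs, Algebra.adjoin_eq_span, Submodule.span_le]
    intro b hb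
    obtain rfl | hbt := ht b hb
    · exact zero_mem _
    · exact Submodule.subset_span hbt
  refine ⟨⟨t, span_eq_top⟩, ?_⟩
  rw [← finrank_top, ← span_eq_top]
  exact finrank_span_finset_le_card t

theorem finite_and_finrank_le_of_pow_eq_zero {K : Type*} [Field K] [Algebra K B] {x y : B}
    {m n : ℕ} (hxy : Algebra.adjoin K {x, y} = ⊤) (hx : x ^ m = 0) (hy : y ^ n = 0) :
    Module.Finite K B ∧ Module.finrank K B ≤ m * n := by
  classical
  let t : Finset B := (Finset.range m ×ˢ Finset.range n).image fun p => x ^ p.1 * y ^ p.2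
  have card_t : t.card ≤ m * n := by
    simpa using Finset.card_image_le (s := Finset.range m ×ˢ Finset.range n)
  refine (finite_and_finrank_le_card_of_closure_subset (t := t) hxy fun b hb => ?_).imp_right
    (le_trans · card_t)
  obtain ⟨i, j, rfl⟩ := (Submonoid.mem_closure_pair _ _ _).1 hb
  by_cases hi : i < m
  · by_cases hj : j < n
    · exact .inr (Finset.mem_image.2 ⟨(i, j), by simp [hi, hj], rfl⟩)
    · exact .inl (by rw [pow_eq_zero_of_le (not_lt.1 hj) hy, mul_zero])
  · exact .inl (by rw [pow_eq_zero_of_le (not_lt.1 hi) hx, zero_mul])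

theorem pow_add_two_eq_zero {x y : B} {m n : ℕ} (hmul : x * y = 0)
    (hpow : x ^ (m + 1) = y ^ (n + 1)) : x ^ (m + 2) = 0 := by
  rw [pow_succ', hpow, pow_succ', ← mul_assoc, hmul, zero_mul]

theorem finite_and_finrank_le_of_mul_eq_zero {K : Type*} [Field K] [Algebra K B] {x y : B}
    {m n : ℕ} (hxy : Algebra.adjoin K {x, y} = ⊤) (hmul : x * y = 0)
    (hpow : x ^ (m + 1) = y ^ (n + 1)) :
    Module.Finite K B ∧ Module.finrank K B ≤ m + n + 2 := by
  classical
  let t : Finset B :=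
    (Finset.range (m + 2)).image (x ^ ·) ∪ (Finset.range n).image fun j => y ^ (j + 1)
  have card_t : t.card ≤ m + n + 2 := by
    calc t.card ≤ (m + 2) + n := (Finset.card_union_le _ _).trans <| by
          simpa using add_le_add (Finset.card_image_le (s := Finset.range (m + 2)))
            (Finset.card_image_le (s := Finset.range n))
      _ = m + n + 2 := by ring
  have x_pow := pow_add_two_eq_zero hmul hpow
  have y_pow := pow_add_two_eq_zero (mul_comm x y ▸ hmul) hpow.symm
  have x_mem : ∀ i, x ^ i = 0 ∨ x ^ i ∈ t := fun i => by
    by_cases hi : i < m + 2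
    · exact .inr (Finset.mem_union_left _ (Finset.mem_image.2 ⟨i, by simpa using hi, rfl⟩))
    · exact .inl (pow_eq_zero_of_le (not_lt.1 hi) x_pow)
  have y_mem : ∀ j, y ^ (j + 1) = 0 ∨ y ^ (j + 1) ∈ t := fun j => by
    obtain hj | rfl | hj := lt_trichotomy j n
    · exact .inr (Finset.mem_union_right _ (Finset.mem_image.2 ⟨j, by simpa using hj, rfl⟩))
    · exact hpow ▸ x_mem (m + 1)
    · exact .inl (pow_eq_zero_of_le (by lia) y_pow)
  refine (finite_and_finrank_le_card_of_closure_subset (t := t) hxy fun b hb => ?_).imp_right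
    (le_trans · card_t)
  obtain ⟨_ | i, _ | j, rfl⟩ := (Submonoid.mem_closure_pair _ _ _).1 hb
  · simpa using x_mem 0
  · simpa using y_mem j
  · simpa using x_mem (i + 1)
  · exact .inl (by linear_combination x ^ i * y ^ j * hmul)

end Generators

section PowerSeries

variable {σ R B : Type*} [Finite σ] [CommRing R] [CommRing B] [Algebra R B]

theorem exists_mvPowerSeries_algHom_X_eq (a : σ → B) (ha : ∀ i, IsNilpotent (a i)) :
    ∃ φ : MvPowerSeries σ R →ₐ[R] B, ∀ i, φ (MvPowerSeries.X i) = a i := by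
  let : UniformSpace R := ⊥
  let : UniformSpace B := ⊥
  have : DiscreteUniformity R := ⟨rfl⟩
  have : DiscreteUniformity B := ⟨rfl⟩
  have : ContinuousSMul R B := ⟨continuous_of_discreteTopology⟩
  have heval : MvPowerSeries.HasEval a :=
    ⟨fun i => (ha i).isTopologicallyNilpotent, by
      rw [Filter.cofinite_eq_bot]; exact Filter.tendsto_bot⟩
  exact ⟨MvPowerSeries.aeval heval, fun i => by
    simpa using MvPowerSeries.aeval_coe heval (MvPolynomial.X i)⟩

theorem mem_span_range_X_of_constantCoeff_eq_zero {f : MvPowerSeries σ R}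
    (hf : MvPowerSeries.constantCoeff f = 0) :
    f ∈ Ideal.span (Set.range (MvPowerSeries.X : σ → MvPowerSeries σ R)) := by
  classical
  have := Fintype.ofFinite σ
  choose i hi using fun (m : σ →₀ ℕ) (hm : m ≠ 0) => Finsupp.ne_iff.1 hm
  let g : σ → MvPowerSeries σ R := fun j m =>
    if ∃ hm : m ≠ 0, i m hm = j then MvPowerSeries.coeff m f else 0
  have coeff_g : ∀ j m, MvPowerSeries.coeff m (g j) =
    if ∃ hm : m ≠ 0, i m hm = j then MvPowerSeries.coeff m f else 0 := fun _ _ => rfl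
  have X_dvd_g : ∀ j, MvPowerSeries.X j ∣ g j := fun j => by
    rw [MvPowerSeries.X_dvd_iff]
    intro m hmj
    rw [coeff_g, if_neg]
    rintro ⟨hm, rfl⟩
    exact hi m hm hmj
  have f_eq : f = ∑ j, g j := by
    ext m
    rw [map_sum]
    by_cases hm : m = 0
    · simpa [coeff_g, hm] using hf
    · simp [coeff_g, hm]
  rw [f_eq]
  exact sum_mem fun j _ => Ideal.mem_of_dvd _ (X_dvd_g j) (Ideal.subset_span ⟨j, rfl⟩)

theorem maximalIdeal_mvPowerSeries_eq_span_range_X (σ K : Type*) [Finite σ] [Field K] :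
    maximalIdeal (MvPowerSeries σ K) = Ideal.span (Set.range MvPowerSeries.X) := by
  refine le_antisymm (fun f hf => mem_span_range_X_of_constantCoeff_eq_zero ?_) ?_
  · by_contra h
    exact hf (MvPowerSeries.isUnit_iff_constantCoeff.2 (Ne.isUnit h))
  · rw [Ideal.span_le]
    rintro _ ⟨i, rfl⟩ h
    simpa using MvPowerSeries.isUnit_iff_constantCoeff.1 h

theorem adjoin_range_eq_top_of_isNilpotent {φ : MvPowerSeries σ R →ₐ[R] B}
    (hφ : Function.Surjective φ) (hX : ∀ i, IsNilpotent (φ (MvPowerSeries.X i))) :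
    Algebra.adjoin R (Set.range fun i => φ (MvPowerSeries.X i)) = ⊤ := by
  refine adjoin_eq_top_of_isNilpotent_span ?_ fun b => ?_
  · rw [Ideal.FG.isNilpotent_iff_le_nilradical (Submodule.fg_span (Set.finite_range _)),
      Ideal.span_le]
    rintro _ ⟨i, rfl⟩
    exact hX i
  · obtain ⟨f, rfl⟩ := hφ b
    refine ⟨MvPowerSeries.constantCoeff f, ?_⟩
    have hf := Ideal.mem_map_of_mem φ (mem_span_range_X_of_constantCoeff_eq_zero
      (f := f - algebraMap R _ (MvPowerSeries.constantCoeff f))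
      (by simp [MvPowerSeries.algebraMap_apply]))
    rwa [Ideal.map_span, ← Set.range_comp, map_sub, AlgHom.commutes] at hf

end PowerSeries

section Presentation

variable {K A : Type*} [Field K] [CommRing A] [Algebra K A]

theorem nonempty_algEquiv_quotient_iff {R : Type*} [CommRing R] [Algebra K R] {I : Ideal R}
    [Module.Finite K A] [Module.Finite K (R ⧸ I)]
    (hI : Module.finrank K (R ⧸ I) ≤ Module.finrank K A) :
    Nonempty (A ≃ₐ[K] R ⧸ I) ↔
      ∃ φ : R →ₐ[K] A, Function.Surjective φ ∧ I ≤ RingHom.ker φ := by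
  constructor
  · rintro ⟨e⟩
    refine ⟨e.symm.toAlgHom.comp (Ideal.Quotient.mkₐ K I),
      e.symm.surjective.comp Ideal.Quotient.mk_surjective, fun r hr => ?_⟩
    simp [RingHom.mem_ker, Ideal.Quotient.eq_zero_iff_mem.2 hr]
  · rintro ⟨φ, hφ, hker⟩
    let ψ : (R ⧸ I) →ₐ[K] A := Ideal.Quotient.liftₐ I φ hker
    have ψ_surjective : Function.Surjective ψ :=
      Ideal.Quotient.lift_surjective_of_surjective I hker hφ
    have finrank_eq : Module.finrank K (R ⧸ I) = Module.finrank K A :=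
      hI.antisymm (LinearMap.finrank_le_finrank_of_surjective (f := ψ.toLinearMap) ψ_surjective)
    have ψ_injective : Function.Injective ψ :=
      (LinearMap.injective_iff_surjective_of_finrank_eq_finrank (f := ψ.toLinearMap)
        finrank_eq).2 ψ_surjective
    exact ⟨(AlgEquiv.ofBijective ψ ⟨ψ_injective, ψ_surjective⟩).symm⟩

variable [IsLocalRing A]

theorem residueFieldIsK.exists_sub_algebraMap_mem (hres : residueFieldIsK K A) (a : A) :
    ∃ c : K, a - algebraMap K A c ∈ maximalIdeal A := by
  obtain ⟨c, hc⟩ := hres.2 (residue A a)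
  refine ⟨c, (residue_eq_zero_iff _).1 ?_⟩
  rw [map_sub, ← hc, IsScalarTower.algebraMap_apply K A (ResidueField A),
    ResidueField.algebraMap_eq, sub_self]

theorem surjective_mvPowerSeries_algHom_iff {σ : Type*} [Finite σ] (hres : residueFieldIsK K A)
    (hnil : IsNilpotent (maximalIdeal A)) {φ : MvPowerSeries σ K →ₐ[K] A} :
    Function.Surjective φ ↔
      Ideal.span (Set.range fun i => φ (MvPowerSeries.X i)) = maximalIdeal A := by
  constructor <;> intro hφ
  · rw [← map_maximalIdeal_of_surjective (φ : MvPowerSeries σ K →+* A) hφ,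
      maximalIdeal_mvPowerSeries_eq_span_range_X, Ideal.map_span, ← Set.range_comp]
    rfl
  · have adjoin_eq_top := adjoin_eq_top_of_isNilpotent_span (R := K) (hφ ▸ hnil)
      (hφ ▸ hres.exists_sub_algebraMap_mem)
    rw [← AlgHom.range_eq_top, eq_top_iff, ← adjoin_eq_top, Algebra.adjoin_le_iff]
    rintro _ ⟨i, rfl⟩
    exact ⟨_, rfl⟩

theorem range_fin_two {α : Type*} (f : Fin 2 → α) : Set.range f = {f 0, f 1} := by
  ext; simp [eq_comm]

theorem exists_surjective_mvPowerSeries_algHom_iff [IsArtinianRing A]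
    (hres : residueFieldIsK K A) (P : A → A → Prop) :
    (∃ φ : MvPowerSeries (Fin 2) K →ₐ[K] A,
      Function.Surjective φ ∧ P (φ (psX 0)) (φ (psX 1))) ↔
      ∃ x y, Ideal.span {x, y} = maximalIdeal A ∧ P x y := by
  have hnil := (isArtinianRing_iff_isNilpotent_maximalIdeal A).1 ‹_›
  constructor
  · rintro ⟨φ, hφ, hP⟩
    refine ⟨_, _, ?_, hP⟩
    rw [← (surjective_mvPowerSeries_algHom_iff hres hnil).1 hφ, range_fin_two]
    rfl
  · rintro ⟨x, y, hxy, hP⟩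
    have nilpotent_of_mem : ∀ a ∈ maximalIdeal A, IsNilpotent a := fun a ha =>
      hnil.imp fun n hn => by simpa [hn] using Ideal.pow_mem_pow ha n
    obtain ⟨φ, hφ⟩ := exists_mvPowerSeries_algHom_X_eq (R := K) ![x, y] (Fin.forall_fin_two.2
      ⟨nilpotent_of_mem x (hxy ▸ Ideal.subset_span (by simp)),
        nilpotent_of_mem y (hxy ▸ Ideal.subset_span (by simp))⟩)
    obtain ⟨rfl, rfl⟩ := Fin.forall_fin_two.1 hφ
    refine ⟨φ, (surjective_mvPowerSeries_algHom_iff hres hnil).2 ?_, hP⟩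
    rw [range_fin_two]
    exact hxy

theorem adjoin_pair_mk_eq_top {I : Ideal (MvPowerSeries (Fin 2) K)}
    (h₀ : IsNilpotent (Ideal.Quotient.mk I (psX 0)))
    (h₁ : IsNilpotent (Ideal.Quotient.mk I (psX 1))) :
    Algebra.adjoin K {Ideal.Quotient.mk I (psX 0), Ideal.Quotient.mk I (psX 1)} = ⊤ := by
  have adjoin_eq_top := adjoin_range_eq_top_of_isNilpotent (Ideal.Quotient.mkₐ_surjective K I)
    (Fin.forall_fin_two.2 ⟨h₀, h₁⟩)
  rwa [range_fin_two] at adjoin_eq_top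

variable [Module.Finite K A] {m n : ℕ}

theorem nonempty_algEquiv_quotient_pow_pow_iff (hres : residueFieldIsK K A)
    (hA : Module.finrank K A = m * n) :
    Nonempty (A ≃ₐ[K] MvPowerSeries (Fin 2) K ⧸
        (Ideal.span {psX 0 ^ m, psX 1 ^ n} : Ideal (MvPowerSeries (Fin 2) K))) ↔
      ∃ x y : A, Ideal.span {x, y} = maximalIdeal A ∧ x ^ m = 0 ∧ y ^ n = 0 := by
  have : IsArtinianRing A := .of_finite K A
  set I : Ideal (MvPowerSeries (Fin 2) K) := Ideal.span {psX 0 ^ m, psX 1 ^ n} with hI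
  have mk_x : Ideal.Quotient.mk I (psX 0) ^ m = 0 := by
    rw [← map_pow, Ideal.Quotient.eq_zero_iff_mem]
    exact Ideal.subset_span (by simp)
  have mk_y : Ideal.Quotient.mk I (psX 1) ^ n = 0 := by
    rw [← map_pow, Ideal.Quotient.eq_zero_iff_mem]
    exact Ideal.subset_span (by simp)
  obtain ⟨_, finrank_le⟩ := finite_and_finrank_le_of_pow_eq_zero (K := K)
    (adjoin_pair_mk_eq_top ⟨m, mk_x⟩ ⟨n, mk_y⟩) mk_x mk_y
  rw [nonempty_algEquiv_quotient_iff (hA ▸ finrank_le),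
    ← exists_surjective_mvPowerSeries_algHom_iff hres]
  simp only [hI, Ideal.span_le, Set.pair_subset_iff, SetLike.mem_coe, RingHom.mem_ker, map_pow]

theorem nonempty_algEquiv_quotient_mul_sub_iff (hres : residueFieldIsK K A)
    (hA : Module.finrank K A = m + n + 2) :
    Nonempty (A ≃ₐ[K] MvPowerSeries (Fin 2) K ⧸
        (Ideal.span {psX 0 * psX 1, psX 0 ^ (m + 1) - psX 1 ^ (n + 1)} :
          Ideal (MvPowerSeries (Fin 2) K))) ↔
      ∃ x y : A, Ideal.span {x, y} = maximalIdeal A ∧ x * y = 0 ∧ x ^ (m + 1) = y ^ (n + 1) := by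
  have : IsArtinianRing A := .of_finite K A
  set I : Ideal (MvPowerSeries (Fin 2) K) :=
    Ideal.span {psX 0 * psX 1, psX 0 ^ (m + 1) - psX 1 ^ (n + 1)} with hI
  have mk_mul : Ideal.Quotient.mk I (psX 0) * Ideal.Quotient.mk I (psX 1) = 0 := by
    rw [← map_mul, Ideal.Quotient.eq_zero_iff_mem]
    exact Ideal.subset_span (by simp)
  have mk_pow : Ideal.Quotient.mk I (psX 0) ^ (m + 1) = Ideal.Quotient.mk I (psX 1) ^ (n + 1) := by
    rw [← map_pow, ← map_pow, Ideal.Quotient.mk_eq_mk_iff_sub_mem]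
    exact Ideal.subset_span (by simp)
  have mk_x : IsNilpotent (Ideal.Quotient.mk I (psX 0)) :=
    ⟨_, pow_add_two_eq_zero mk_mul mk_pow⟩
  have mk_y : IsNilpotent (Ideal.Quotient.mk I (psX 1)) :=
    ⟨_, pow_add_two_eq_zero (by rw [mul_comm, mk_mul]) mk_pow.symm⟩
  obtain ⟨_, finrank_le⟩ := finite_and_finrank_le_of_mul_eq_zero (K := K)
    (adjoin_pair_mk_eq_top mk_x mk_y) mk_mul mk_pow
  rw [nonempty_algEquiv_quotient_iff (hA ▸ finrank_le),
    ← exists_surjective_mvPowerSeries_algHom_iff hres]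
  simp only [hI, Ideal.span_le, Set.pair_subset_iff, SetLike.mem_coe, RingHom.mem_ker, map_pow,
    map_mul, map_sub, sub_eq_zero]

end Presentation

section HilbertFunction

variable {A : Type*} [CommRing A]

theorem finrank_quotient_add_finrank_of_isScalarTower {K M : Type*} [Field K] [Algebra K A]
    [AddCommGroup M] [Module A M] [Module K M] [IsScalarTower K A M] [Module.Finite K M]
    (N : Submodule A M) :
    Module.finrank K (M ⧸ N) + Module.finrank K N = Module.finrank K M := by
  rw [← (Submodule.Quotient.restrictScalarsEquiv K N).finrank_eq]
  exact Submodule.finrank_quotient_add_finrank (N.restrictScalars K)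

theorem exists_span_pair_eq_of_spanFinrank_eq_two {I : Ideal A} (hI : I.spanFinrank = 2) :
    ∃ x y, Ideal.span {x, y} = I := by
  have hfg : I.FG := by
    by_contra h
    simp [Submodule.spanFinrank_of_not_fg h] at hI
  obtain ⟨s, hs, rfl⟩ := Submodule.FG.exists_span_set_encard_eq_spanFinrank hfg
  rw [hI] at hs
  obtain ⟨x, y, -, rfl⟩ := Set.encard_eq_two.1 hs
  exact ⟨x, y, rfl⟩

theorem not_isPrincipal_of_one_lt_spanFinrank {I : Ideal A} (hI : 1 < I.spanFinrank) :
    ¬I.IsPrincipal := fun h => by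
  obtain ⟨a, rfl⟩ := h
  have := Submodule.spanFinrank_span_le_ncard_of_finite (R := A) (Set.finite_singleton a)
  rw [Set.ncard_singleton] at this
  exact hI.not_ge this

variable [IsLocalRing A] {K : Type*} [Field K] [Algebra K A]

theorem residueFieldIsK_iff_finrank_eq_one :
    residueFieldIsK K A ↔ Module.finrank K (ResidueField A) = 1 :=
  Algebra.finrank_eq_one_iff_bijective_algebraMap.symm

theorem hilbLoc_zero_eq_finrank_residueField :
    hilbLoc K A 0 = Module.finrank K (ResidueField A) := by
  have : Subsingleton (A ⧸ maximalIdeal A ^ 0) := by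
    rw [pow_zero, Ideal.one_eq_top]
    infer_instance
  rw [hilbLoc, Module.finrank_zero_of_subsingleton (M := A ⧸ maximalIdeal A ^ 0), tsub_zero,
    zero_add, pow_one]
  rfl

theorem residueFieldIsK_iff_hilbLoc_zero_eq_one : residueFieldIsK K A ↔ hilbLoc K A 0 = 1 := by
  rw [hilbLoc_zero_eq_finrank_residueField, residueFieldIsK_iff_finrank_eq_one]

theorem finite_of_hilbLoc_ne_zero {n : ℕ} (hm : maximalIdeal A ^ (n + 1) = ⊥)
    (hn : hilbLoc K A n ≠ 0) : Module.Finite K A := by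
  have finrank_pos : 0 < Module.finrank K (A ⧸ maximalIdeal A ^ (n + 1)) := by
    rw [hilbLoc] at hn; lia
  have := Module.finite_of_finrank_pos finrank_pos
  exact Module.Finite.of_injective ((Ideal.Quotient.mkₐ K (maximalIdeal A ^ (n + 1))).toLinearMap)
    (by simp [RingHom.injective_iff_ker_eq_bot, hm])

theorem finrank_pow_succ_add_hilbLoc (K A : Type*) [Field K] [CommRing A] [IsLocalRing A]
    [Algebra K A] [Module.Finite K A] (i : ℕ) :
    Module.finrank K ↥(maximalIdeal A ^ (i + 1)) + hilbLoc K A i =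
      Module.finrank K ↥(maximalIdeal A ^ i) := by
  have finrank_anti : Module.finrank K ↥(maximalIdeal A ^ (i + 1)) ≤
      Module.finrank K ↥(maximalIdeal A ^ i) :=
    Submodule.finrank_mono (s := (maximalIdeal A ^ (i + 1)).restrictScalars K)
      (t := (maximalIdeal A ^ i).restrictScalars K) (Ideal.pow_le_pow_right i.le_succ)
  have := finrank_quotient_add_finrank_of_isScalarTower (K := K) (maximalIdeal A ^ i)
  have := finrank_quotient_add_finrank_of_isScalarTower (K := K) (maximalIdeal A ^ (i + 1))
  rw [hilbLoc]
  lia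

theorem spanFinrank_maximalIdeal_pow [Module.Finite K A] (hres : residueFieldIsK K A) (i : ℕ) :
    (maximalIdeal A ^ i).spanFinrank = hilbLoc K A i := by
  have : IsNoetherianRing A := .of_finite K A
  have : Module.Finite K ↥(maximalIdeal A ^ i) :=
    inferInstanceAs (Module.Finite K ((maximalIdeal A ^ i).restrictScalars K))
  let N : Submodule A ↥(maximalIdeal A ^ i) := maximalIdeal A • ⊤
  have map_N : N.map (maximalIdeal A ^ i).subtype = maximalIdeal A ^ (i + 1) := by
    rw [Submodule.map_smul'', Submodule.map_subtype_top, smul_eq_mul, pow_succ']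
  have finrank_N : Module.finrank K N = Module.finrank K ↥(maximalIdeal A ^ (i + 1)) := by
    rw [← map_N]
    exact ((Submodule.equivSubtypeMap _ N).restrictScalars K).finrank_eq
  have finrank_quotient : Module.finrank (A ⧸ maximalIdeal A) (↥(maximalIdeal A ^ i) ⧸ N) =
      Module.finrank K (↥(maximalIdeal A ^ i) ⧸ N) := by
    let : Field (A ⧸ maximalIdeal A) := Ideal.Quotient.field _
    have finrank_residueField : Module.finrank K (A ⧸ maximalIdeal A) = 1 :=
      residueFieldIsK_iff_finrank_eq_one.1 hres
    rw [← Module.finrank_mul_finrank K (A ⧸ maximalIdeal A), finrank_residueField, one_mul]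
  have := finrank_pow_succ_add_hilbLoc K A i
  have := finrank_quotient_add_finrank_of_isScalarTower (K := K) N
  rw [IsLocalRing.spanFinrank_eq_finrank_quotient _ (IsNoetherian.noetherian _),
    finrank_quotient]
  lia

theorem finrank_maximalIdeal_pow_eq_sum_hilbLoc (K : Type*) [Field K] [Algebra K A]
    [Module.Finite K A] {i n : ℕ} (hm : maximalIdeal A ^ n = ⊥) (hi : i ≤ n) :
    Module.finrank K ↥(maximalIdeal A ^ i) = ∑ j ∈ Finset.Ico i n, hilbLoc K A j := by
  induction hi using Nat.decreasingInduction with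
  | self =>
    rw [hm, Finset.Ico_self, Finset.sum_empty]
    exact Module.finrank_zero_of_subsingleton
  | of_succ i hi ih =>
    rw [← finrank_pow_succ_add_hilbLoc, ih, Finset.sum_eq_sum_Ico_succ_bot hi, add_comm]

theorem finrank_eq_sum_hilbLoc (K : Type*) [Field K] [Algebra K A] [Module.Finite K A]
    {n : ℕ} (hm : maximalIdeal A ^ n = ⊥) :
    Module.finrank K A = ∑ j ∈ Finset.range n, hilbLoc K A j := by
  rw [Finset.range_eq_Ico, ← finrank_maximalIdeal_pow_eq_sum_hilbLoc K hm n.zero_le, pow_zero,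
    Ideal.one_eq_top]
  exact (finrank_top K A).symm

theorem socle_eq_maximalIdeal_pow [Module.Finite K A] {n : ℕ} (hGor : socDimLoc K A = 1)
    (hm : maximalIdeal A ^ (n + 1) = ⊥) (hn : Module.finrank K ↥(maximalIdeal A ^ n) = 1) :
    (⊥ : Ideal A).colon (maximalIdeal A) = maximalIdeal A ^ n := by
  have pow_le_socle :
      (maximalIdeal A ^ n).restrictScalars K ≤
        ((⊥ : Ideal A).colon (maximalIdeal A)).restrictScalars K :=
    fun a ha => Submodule.mem_colon.2 fun b hb => by
      rw [← hm, pow_succ]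
      exact Ideal.mul_mem_mul ha hb
  exact (Submodule.restrictScalars_injective K A A
    (Submodule.eq_of_le_of_finrank_eq pow_le_socle (hn.trans hGor.symm))).symm

end HilbertFunction

section LocalRing

open scoped Pointwise

variable {A : Type*} [CommRing A]

theorem span_pair_sq (x y : A) :
    Ideal.span {x, y} ^ 2 = Ideal.span {x ^ 2, x * y, y ^ 2} := by
  rw [sq, Ideal.span_pair_mul_span_pair, mul_comm y x, Set.insert_comm, ← sq, ← sq]
  simp

theorem span_pair_cube (x y : A) :
    Ideal.span {x, y} ^ 3 = Ideal.span {x ^ 3, x ^ 2 * y, x * y ^ 2, y ^ 3} := by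
  rw [pow_succ, span_pair_sq, Ideal.span_mul_span']
  have mul_x : x * y * x = x ^ 2 * y := by ring
  have mul_y : x * y * y = x * y ^ 2 := by ring
  congr 1
  ext
  simp only [Set.insert_eq, Set.union_mul, Set.singleton_mul, Set.image_union, Set.image_singleton,
    ← pow_succ, Nat.reduceAdd, mul_x, mul_y, mul_comm (y ^ 2) x, Set.mem_union,
    Set.mem_singleton_iff]
  tauto

theorem mul_eq_zero_of_mem_pow {I : Ideal A} {n i j : ℕ} {a b : A}
    (hI : I ^ n = ⊥) (ha : a ∈ I ^ i) (hb : b ∈ I ^ j) (hn : n ≤ i + j) : a * b = 0 := by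
  rw [← Ideal.mem_bot, ← hI]
  exact Ideal.pow_le_pow_right hn (pow_add I i j ▸ Ideal.mul_mem_mul ha hb)

variable [IsLocalRing A] {x y : A}

theorem isPrincipal_of_le_span_singleton_sup {I : Ideal A} {w : A} (hI : I.FG) (hw : w ∈ I)
    (h : I ≤ Ideal.span {w} ⊔ maximalIdeal A * I) : I.IsPrincipal :=
  ⟨w, le_antisymm
    (Submodule.le_of_le_smul_of_le_jacobson_bot hI (maximalIdeal_le_jacobson ⊥) h)
    ((Ideal.span_singleton_le_iff_mem I).2 hw)⟩

-- If `y = a * u + b * v`, then `u * y ^ 2 = a ^ 2 * u ^ 3` and `v * y ^ 2 = b ^ 2 * u ^ 3` vanish,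
-- so `a` and `b` are not units. Hence `y ∈ m ^ 2`, and `x` alone generates `m`.
theorem isPrincipal_maximalIdeal_of_sq_eq_zero_of_mul_eq_zero {u v : A}
    (hxy : Ideal.span {x, y} = maximalIdeal A) (hy : y ^ 2 = 0)
    (huv : Ideal.span {u, v} = maximalIdeal A) (hmul : u * v = 0) (hcube : u ^ 3 = v ^ 3)
    (hm3 : maximalIdeal A ^ 3 ≠ ⊥) : (maximalIdeal A).IsPrincipal := by
  have u_cube_ne : u ^ 3 ≠ 0 := fun hu => hm3 <| by
    rw [← huv, span_pair_cube, Ideal.span_eq_bot]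
    simp [← hcube, hu, sq, mul_assoc, ← mul_assoc u v, hmul]
  have mem_of_mul_u_cube : ∀ c : A, c * u ^ 3 = 0 → c ∈ maximalIdeal A := fun c hc hunit =>
    u_cube_ne (hunit.mul_right_eq_zero.1 hc)
  have hx_mem : x ∈ maximalIdeal A := hxy ▸ Ideal.subset_span (by simp)
  have hy_mem : y ∈ Ideal.span {u, v} := huv.trans hxy.symm ▸ Ideal.subset_span (by simp)
  obtain ⟨a, b, rfl⟩ := Ideal.mem_span_pair.1 hy_mem
  have ha : a ∈ maximalIdeal A := Ideal.IsPrime.mem_of_pow_mem inferInstance 2 <|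
    mem_of_mul_u_cube _ <| by linear_combination u * hy - (2 * a * b * u + b ^ 2 * v) * hmul
  have hb : b ∈ maximalIdeal A := Ideal.IsPrime.mem_of_pow_mem inferInstance 2 <|
    mem_of_mul_u_cube _ <| by
      linear_combination v * hy - (a ^ 2 * u + 2 * a * b * v) * hmul + b ^ 2 * hcube
  have hu : u ∈ maximalIdeal A := huv ▸ Ideal.subset_span (by simp)
  have hv : v ∈ maximalIdeal A := huv ▸ Ideal.subset_span (by simp)
  refine isPrincipal_of_le_span_singleton_sup (hxy ▸ Submodule.fg_span (by simp)) hx_mem ?_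
  nth_rw 1 [← hxy]
  rw [Ideal.span_insert]
  exact sup_le_sup_left ((Ideal.span_singleton_le_iff_mem _).2
    (add_mem (Ideal.mul_mem_mul ha hu) (Ideal.mul_mem_mul hb hv))) _

theorem isPrincipal_maximalIdeal_sq_of_mem_cube (hxy : Ideal.span {x, y} = maximalIdeal A)
    (hmul : x * y ∈ maximalIdeal A ^ 3) (hsq : y ^ 2 ∈ maximalIdeal A ^ 3) :
    (maximalIdeal A ^ 2).IsPrincipal := by
  have hx : x ^ 2 ∈ maximalIdeal A ^ 2 := by
    rw [← hxy]; exact Ideal.pow_mem_pow (Ideal.subset_span (by simp)) 2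
  have span_eq : Ideal.span {x ^ 2, x * y, y ^ 2} = maximalIdeal A ^ 2 := by
    rw [← hxy, span_pair_sq]
  refine isPrincipal_of_le_span_singleton_sup (span_eq ▸ Submodule.fg_span (by simp)) hx ?_
  rw [← pow_succ']
  nth_rw 1 [← span_eq]
  rw [Ideal.span_insert]
  refine sup_le_sup_left (Ideal.span_le.2 ?_) _
  exact Set.pair_subset hmul hsq

theorem mem_cube_of_mul_eq_zero
    (hsoc : (⊥ : Ideal A).colon (maximalIdeal A) ≤ maximalIdeal A ^ 3)
    (hxy : Ideal.span {x, y} = maximalIdeal A) {a : A} (hax : a * x = 0) (hay : a * y = 0) :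
    a ∈ maximalIdeal A ^ 3 := by
  refine hsoc (Submodule.mem_colon.2 fun b hb => ?_)
  rw [← hxy] at hb
  obtain ⟨p, q, rfl⟩ := Ideal.mem_span_pair.1 hb
  rw [smul_eq_mul, Ideal.mem_bot]
  linear_combination p * hax + q * hay

theorem cube_ne_zero_of_mul_mem_cube (hm4 : maximalIdeal A ^ 4 = ⊥)
    (hsoc : (⊥ : Ideal A).colon (maximalIdeal A) ≤ maximalIdeal A ^ 3)
    (hsq : ¬(maximalIdeal A ^ 2).IsPrincipal)
    (hxy : Ideal.span {x, y} = maximalIdeal A) (hmul : x * y ∈ maximalIdeal A ^ 3) :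
    y ^ 3 ≠ 0 := fun hy3 => by
  have hy : y ∈ maximalIdeal A ^ 1 := by
    rw [pow_one, ← hxy]; exact Ideal.subset_span (by simp)
  have x_mul_sq : x * y * y = 0 := mul_eq_zero_of_mem_pow hm4 hmul hy le_rfl
  exact hsq (isPrincipal_maximalIdeal_sq_of_mem_cube hxy hmul (mem_cube_of_mul_eq_zero hsoc hxy
    (by linear_combination x_mul_sq) (by linear_combination hy3)))

theorem sq_mul_ne_zero_of_sq_mem_cube (hm4 : maximalIdeal A ^ 4 = ⊥)
    (hsoc : (⊥ : Ideal A).colon (maximalIdeal A) ≤ maximalIdeal A ^ 3)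
    (hsq : ¬(maximalIdeal A ^ 2).IsPrincipal)
    (hxy : Ideal.span {x, y} = maximalIdeal A) (hy2 : y ^ 2 ∈ maximalIdeal A ^ 3) :
    x ^ 2 * y ≠ 0 := fun hx2y => by
  have hx : x ∈ maximalIdeal A ^ 1 := by
    rw [pow_one, ← hxy]; exact Ideal.subset_span (by simp)
  have x_mul_sq : y ^ 2 * x = 0 := mul_eq_zero_of_mem_pow hm4 hy2 hx le_rfl
  exact hsq (isPrincipal_maximalIdeal_sq_of_mem_cube hxy (mem_cube_of_mul_eq_zero hsoc hxy
    (by linear_combination hx2y) (by linear_combination x_mul_sq)) hy2)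

end LocalRing

section NormalForm

theorem exists_add_eq_and_mul_eq {K : Type*} [Field K] [IsAlgClosed K] (b c : K) :
    ∃ r s, r + s = b ∧ r * s = c := by
  open Polynomial in
  obtain ⟨r, hr⟩ := IsAlgClosed.exists_root (C 1 * X ^ 2 + C (-b) * X + C c)
    (by rw [degree_quadratic one_ne_zero]; decide)
  refine ⟨r, b - r, by ring, ?_⟩
  simp only [map_one, one_mul, IsRoot.def, eval_add, eval_mul, eval_pow, eval_X, eval_C] at hr
  linear_combination -hr

variable {K A : Type*} [Field K] [CommRing A] [Algebra K A]

theorem span_pair_sub_smul_eq_span_pair {r s : K} (hrs : r ≠ s) (x y : A) :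
    Ideal.span {x - r • y, x - s • y} = Ideal.span {x, y} := by
  have hunit : IsUnit (algebraMap K A (s - r)) := (sub_ne_zero.2 hrs.symm).isUnit.map _
  calc Ideal.span {x - r • y, x - s • y}
      = Ideal.span {x - r • y - 1 * (x - s • y), x - s • y} :=
        (Ideal.span_pair_sub_mul_right ..).symm
    _ = Ideal.span {algebraMap K A (s - r) * y, x - s • y} := by
      rw [one_mul, sub_sub_sub_cancel_left, ← sub_smul, Algebra.smul_def]
    _ = Ideal.span {y, x - s • y} := by
      rw [Ideal.span_insert, Ideal.span_singleton_mul_left_unit hunit, ← Ideal.span_insert]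
    _ = Ideal.span {x, y} := by
      rw [Algebra.smul_def, Ideal.span_pair_sub_mul_left, Ideal.span_pair_comm]

theorem exists_span_pair_eq_and_mul_mem_or_sq_mem_of_monic [IsAlgClosed K] {J : Ideal A} {x y : A}
    {b c : K} (h : x ^ 2 + b • (x * y) + c • y ^ 2 ∈ J) :
    ∃ u v, Ideal.span {u, v} = Ideal.span {x, y} ∧ (u * v ∈ J ∨ v ^ 2 ∈ J) := by
  obtain ⟨r, s, hrs, rfl⟩ := exists_add_eq_and_mul_eq (-b) c
  obtain rfl : b = -(r + s) := by rw [hrs, neg_neg]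
  have factored : (x - r • y) * (x - s • y) ∈ J := by
    convert h using 1
    simp only [Algebra.smul_def, map_neg, map_add, map_mul]
    ring
  by_cases hrs : r = s
  · subst hrs
    refine ⟨y, x - r • y, ?_, .inr (by rwa [sq])⟩
    rw [Ideal.span_pair_comm, Algebra.smul_def, Ideal.span_pair_sub_mul_right]
  · exact ⟨_, _, span_pair_sub_smul_eq_span_pair hrs x y, .inl factored⟩

theorem exists_span_pair_eq_and_mul_mem_or_sq_mem [IsAlgClosed K] {J : Ideal A} {x y : A}
    {a b c : K} (hne : a ≠ 0 ∨ b ≠ 0 ∨ c ≠ 0) (h : a • x ^ 2 + b • (x * y) + c • y ^ 2 ∈ J) :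
    ∃ u v, Ideal.span {u, v} = Ideal.span {x, y} ∧ (u * v ∈ J ∨ v ^ 2 ∈ J) := by
  have smul_mem : ∀ (t : K) {z : A}, z ∈ J → t • z ∈ J := fun t z hz =>
    (J.restrictScalars K).smul_mem t hz
  by_cases ha : a = 0
  · by_cases hc : c = 0
    · refine ⟨x, y, rfl, .inl ?_⟩
      have hb : b ≠ 0 := by tauto
      simpa [ha, hc, smul_smul, hb] using smul_mem b⁻¹ h
    · rw [Ideal.span_pair_comm]
      refine exists_span_pair_eq_and_mul_mem_or_sq_mem_of_monic (b := c⁻¹ * b) (c := c⁻¹ * a) ?_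
      convert smul_mem c⁻¹ h using 1
      simp only [smul_add, smul_smul, inv_mul_cancel₀ hc, one_smul, mul_comm y x]
      abel
  · refine exists_span_pair_eq_and_mul_mem_or_sq_mem_of_monic (b := a⁻¹ * b) (c := a⁻¹ * c) ?_
    simpa only [smul_add, smul_smul, inv_mul_cancel₀ ha, one_smul] using smul_mem a⁻¹ h

theorem exists_sum_smul_mem {M : Type*} [AddCommGroup M] [Module A M] [Module K M]
    [IsScalarTower K A M] {n : ℕ} {N P : Submodule A M} [Module.Finite K P] (hNP : N ≤ P)
    {v : Fin n → M} (hv : ∀ i, v i ∈ P)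
    (h : Module.finrank K P < Module.finrank K N + n) :
    ∃ c : Fin n → K, c ≠ 0 ∧ ∑ i, c i • v i ∈ N := by
  let f : (Fin n → K) →ₗ[K] P ⧸ N.submoduleOf P :=
    (N.submoduleOf P).mkQ.restrictScalars K ∘ₗ
      Fintype.linearCombination K fun i => (⟨v i, hv i⟩ : P)
  have finrank_add := finrank_quotient_add_finrank_of_isScalarTower (K := K) (N.submoduleOf P)
  rw [((Submodule.submoduleOfEquivOfLe hNP).restrictScalars K).finrank_eq] at finrank_add
  obtain ⟨c, hc, c_ne⟩ := Submodule.exists_mem_ne_zero_of_ne_bot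
    (f.ker_ne_bot_of_finrank_lt (by rw [Module.finrank_fin_fun]; lia))
  refine ⟨c, c_ne, ?_⟩
  have sum_mem : Fintype.linearCombination K (fun i => (⟨v i, hv i⟩ : P)) c ∈ N.submoduleOf P :=
    (Submodule.Quotient.mk_eq_zero _).1 hc
  simpa [Submodule.submoduleOf, Fintype.linearCombination_apply] using sum_mem

theorem exists_algebraMap_mul_eq {I : Ideal A} (hI : Module.finrank K I = 1)
    {p q : A} (hp : p ∈ I) (hp0 : p ≠ 0) (hq : q ∈ I) : ∃ c : K, q = algebraMap K A c * p := by
  obtain ⟨c, hc⟩ := exists_smul_eq_of_finrank_eq_one hI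
    (x := (⟨p, hp⟩ : I)) (fun h => hp0 (congrArg Subtype.val h)) ⟨q, hq⟩
  exact ⟨c, by simpa [Algebra.smul_def] using (congrArg Subtype.val hc).symm⟩

variable [IsLocalRing A] {x y : A}

theorem exists_mul_eq_zero_and_cube_eq_cube [IsAlgClosed K] (hm4 : maximalIdeal A ^ 4 = ⊥)
    (hsoc : (⊥ : Ideal A).colon (maximalIdeal A) ≤ maximalIdeal A ^ 3)
    (hsq : ¬(maximalIdeal A ^ 2).IsPrincipal)
    (hm3 : Module.finrank K ↥(maximalIdeal A ^ 3) = 1)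
    (hxy : Ideal.span {x, y} = maximalIdeal A) (hmul : x * y ∈ maximalIdeal A ^ 3) :
    ∃ u v, Ideal.span {u, v} = maximalIdeal A ∧ u * v = 0 ∧ u ^ 3 = v ^ 3 := by
  have hx : x ∈ maximalIdeal A := hxy ▸ Ideal.subset_span (by simp)
  have hy : y ∈ maximalIdeal A := hxy ▸ Ideal.subset_span (by simp)
  have x_cube_ne : x ^ 3 ≠ 0 := cube_ne_zero_of_mul_mem_cube hm4 hsoc hsq
    (Ideal.span_pair_comm.trans hxy) (mul_comm x y ▸ hmul)
  have y_cube_ne : y ^ 3 ≠ 0 := cube_ne_zero_of_mul_mem_cube hm4 hsoc hsq hxy hmul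
  have x_sq_mul : x * y * x = 0 := mul_eq_zero_of_mem_pow hm4 hmul (by rwa [pow_one]) le_rfl
  have x_pow_four : x ^ 4 = 0 := by rw [← Ideal.mem_bot, ← hm4]; exact Ideal.pow_mem_pow hx 4
  obtain ⟨a, ha⟩ := exists_algebraMap_mul_eq hm3 (Ideal.pow_mem_pow hx 3) x_cube_ne hmul
  obtain ⟨c, hc⟩ := exists_algebraMap_mul_eq hm3 (Ideal.pow_mem_pow hx 3) x_cube_ne
    (Ideal.pow_mem_pow hy 3)
  obtain ⟨t, rfl⟩ := IsAlgClosed.exists_pow_nat_eq c (n := 3) (by norm_num)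
  have ht : IsUnit (algebraMap K A t) := by
    refine (isUnit_iff_ne_zero.2 fun h => y_cube_ne ?_).map _
    simp [hc, h]
  refine ⟨algebraMap K A t * x, y - algebraMap K A a * x * x, ?_, ?_, ?_⟩
  · rw [Ideal.span_insert, Ideal.span_singleton_mul_left_unit ht, ← Ideal.span_insert,
      Ideal.span_pair_sub_mul_left, hxy]
  · linear_combination algebraMap K A t * ha
  · rw [map_pow] at hc
    generalize algebraMap K A a = α at *
    linear_combination -hc + (3 * α * y - 3 * α ^ 2 * x ^ 2) * x_sq_mul + α ^ 3 * x ^ 2 * x_pow_four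

theorem exists_cube_eq_zero_and_sq_eq_zero [NeZero (2 : K)] [NeZero (3 : K)]
    (hm4 : maximalIdeal A ^ 4 = ⊥)
    (hsoc : (⊥ : Ideal A).colon (maximalIdeal A) ≤ maximalIdeal A ^ 3)
    (hsq : ¬(maximalIdeal A ^ 2).IsPrincipal)
    (hm3 : Module.finrank K ↥(maximalIdeal A ^ 3) = 1)
    (hxy : Ideal.span {x, y} = maximalIdeal A) (hy2 : y ^ 2 ∈ maximalIdeal A ^ 3) :
    ∃ u v, Ideal.span {u, v} = maximalIdeal A ∧ u ^ 3 = 0 ∧ v ^ 2 = 0 := by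
  have hx : x ∈ maximalIdeal A := hxy ▸ Ideal.subset_span (by simp)
  have hy : y ∈ maximalIdeal A := hxy ▸ Ideal.subset_span (by simp)
  have p_ne : x ^ 2 * y ≠ 0 := sq_mul_ne_zero_of_sq_mem_cube hm4 hsoc hsq hxy hy2
  have p_mem : x ^ 2 * y ∈ maximalIdeal A ^ 3 := by
    rw [pow_succ]; exact Ideal.mul_mem_mul (Ideal.pow_mem_pow hx 2) hy
  have x_pow_four : x ^ 4 = 0 := by rw [← Ideal.mem_bot, ← hm4]; exact Ideal.pow_mem_pow hx 4
  obtain ⟨b, hb⟩ := exists_algebraMap_mul_eq hm3 p_mem p_ne (Ideal.pow_mem_pow hx 3)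
  obtain ⟨c, hc⟩ := exists_algebraMap_mul_eq hm3 p_mem p_ne hy2
  obtain ⟨p, rfl⟩ : ∃ p, 3 * p = b := ⟨3⁻¹ * b, mul_inv_cancel_left₀ three_ne_zero b⟩
  obtain ⟨q, rfl⟩ : ∃ q, 2 * q = c := ⟨2⁻¹ * c, mul_inv_cancel_left₀ two_ne_zero c⟩
  rw [map_mul, map_ofNat] at hb hc
  generalize algebraMap K A p = π at hb
  generalize algebraMap K A q = κ at hc
  have v_sq : (y - κ * x * x) ^ 2 = 0 := by linear_combination hc + κ ^ 2 * x_pow_four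
  refine ⟨x - π * (y - κ * x * x), y - κ * x * x, ?_, ?_, v_sq⟩
  · rw [Ideal.span_pair_sub_mul_right, Ideal.span_pair_sub_mul_left, hxy]
  · linear_combination
      hb + 3 * π * κ * x_pow_four + (3 * π ^ 2 * x - π ^ 3 * (y - κ * x * x)) * v_sq

theorem exists_span_pair_eq_and_mul_mem_cube_or_sq_mem_cube [IsAlgClosed K] [Module.Finite K A]
    (hxy : Ideal.span {x, y} = maximalIdeal A)
    (hdim : Module.finrank K ↥(maximalIdeal A ^ 2) < Module.finrank K ↥(maximalIdeal A ^ 3) + 3) :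
    ∃ u v, Ideal.span {u, v} = maximalIdeal A ∧
      (u * v ∈ maximalIdeal A ^ 3 ∨ v ^ 2 ∈ maximalIdeal A ^ 3) := by
  let v : Fin 3 → A := ![x ^ 2, x * y, y ^ 2]
  have mem_sq : ∀ i, v i ∈ maximalIdeal A ^ 2 := by
    have subset_sq : {x ^ 2, x * y, y ^ 2} ⊆ ((maximalIdeal A ^ 2 : Ideal A) : Set A) := by
      rw [← hxy, span_pair_sq]
      exact Ideal.subset_span
    simpa [v, Fin.forall_fin_succ, Set.insert_subset_iff] using subset_sq
  have : Module.Finite K ↥(maximalIdeal A ^ 2) :=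
    inferInstanceAs (Module.Finite K ((maximalIdeal A ^ 2).restrictScalars K))
  obtain ⟨c, hc, sum_mem⟩ :=
    exists_sum_smul_mem (Ideal.pow_le_pow_right (Nat.le_succ 2)) mem_sq hdim
  rw [← hxy] at sum_mem ⊢
  refine exists_span_pair_eq_and_mul_mem_or_sq_mem (a := c 0) (b := c 1) (c := c 2) ?_
    (by simpa [v, Fin.sum_univ_three] using sum_mem)
  contrapose! hc
  ext i
  fin_cases i <;> simp [hc]

theorem exists_normal_form [IsAlgClosed K] [NeZero (2 : K)] [NeZero (3 : K)] [Module.Finite K A]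
    (hm4 : maximalIdeal A ^ 4 = ⊥)
    (hsoc : (⊥ : Ideal A).colon (maximalIdeal A) ≤ maximalIdeal A ^ 3)
    (hsq : ¬(maximalIdeal A ^ 2).IsPrincipal)
    (hm2 : Module.finrank K ↥(maximalIdeal A ^ 2) = 3)
    (hm3 : Module.finrank K ↥(maximalIdeal A ^ 3) = 1)
    (hxy : Ideal.span {x, y} = maximalIdeal A) :
    (∃ u v, Ideal.span {u, v} = maximalIdeal A ∧ u ^ 3 = 0 ∧ v ^ 2 = 0) ∨
      ∃ u v, Ideal.span {u, v} = maximalIdeal A ∧ u * v = 0 ∧ u ^ 3 = v ^ 3 := by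
  obtain ⟨u, v, huv, hmul | hv2⟩ :=
    exists_span_pair_eq_and_mul_mem_cube_or_sq_mem_cube (K := K) hxy (by lia)
  · exact .inr (exists_mul_eq_zero_and_cube_eq_cube hm4 hsoc hsq hm3 huv hmul)
  · exact .inl (exists_cube_eq_zero_and_sq_eq_zero hm4 hsoc hsq hm3 huv hv2)

end NormalForm

theorem classification_hilbert_1221_general
    {K : Type*} [Field K] [IsAlgClosed K] [NeZero (2 : K)] [NeZero (3 : K)]
    (A : Type*) [CommRing A] [IsLocalRing A] [Algebra K A]
    (hGor : socDimLoc K A = 1)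
    (h0 : hilbLoc K A 0 = 1) (h1 : hilbLoc K A 1 = 2) (h2 : hilbLoc K A 2 = 2)
    (h3 : hilbLoc K A 3 = 1) (hm4 : maximalIdeal A ^ 4 = ⊥) :
    Xor
      (Nonempty (A ≃ₐ[K] (MvPowerSeries (Fin 2) K ⧸
        (Ideal.span {psX 0 ^ 3, psX 1 ^ 2} : Ideal (MvPowerSeries (Fin 2) K)))))
      (Nonempty (A ≃ₐ[K] (MvPowerSeries (Fin 2) K ⧸
        (Ideal.span {psX 0 * psX 1, psX 0 ^ 3 - psX 1 ^ 3} :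
          Ideal (MvPowerSeries (Fin 2) K))))) := by
  have hres : residueFieldIsK K A := residueFieldIsK_iff_hilbLoc_zero_eq_one.2 h0
  have : Module.Finite K A := finite_of_hilbLoc_ne_zero hm4 (by lia)
  have finrank_A : Module.finrank K A = 6 := by
    simp [finrank_eq_sum_hilbLoc K hm4, Finset.sum_range_succ, h0, h1, h2, h3]
  have finrank_sq : Module.finrank K ↥(maximalIdeal A ^ 2) = 3 := by
    simp [finrank_maximalIdeal_pow_eq_sum_hilbLoc K hm4, Finset.sum_Ico_succ_top, h2, h3]
  have finrank_cube : Module.finrank K ↥(maximalIdeal A ^ 3) = 1 := by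
    simp [finrank_maximalIdeal_pow_eq_sum_hilbLoc K hm4, h3]
  have cube_ne_bot : maximalIdeal A ^ 3 ≠ ⊥ := fun h => by
    rw [h, Module.finrank_zero_of_subsingleton] at finrank_cube
    exact zero_ne_one finrank_cube
  have socle_le := (socle_eq_maximalIdeal_pow hGor hm4 finrank_cube).le
  have spanFinrank_m : (maximalIdeal A).spanFinrank = 2 := by
    rw [← h1, ← spanFinrank_maximalIdeal_pow hres, pow_one]
  have sq_not_principal : ¬(maximalIdeal A ^ 2).IsPrincipal :=
    not_isPrincipal_of_one_lt_spanFinrank (by rw [spanFinrank_maximalIdeal_pow hres]; lia)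
  obtain ⟨x, y, hxy⟩ := exists_span_pair_eq_of_spanFinrank_eq_two spanFinrank_m
  rw [xor_iff_or_and_not_and, nonempty_algEquiv_quotient_pow_pow_iff hres finrank_A,
    nonempty_algEquiv_quotient_mul_sub_iff (m := 2) (n := 2) hres finrank_A]
  refine ⟨exists_normal_form hm4 socle_le sq_not_principal finrank_sq finrank_cube hxy, ?_⟩
  rintro ⟨⟨x, y, hxy, -, hy⟩, ⟨u, v, huv, hmul, hcube⟩⟩
  exact not_isPrincipal_of_one_lt_spanFinrank (by lia)
    (isPrincipal_maximalIdeal_of_sq_eq_zero_of_mul_eq_zero hxy hy huv hmul hcube cube_ne_bot)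

/-- Classification of Artinian Gorenstein local `K`-algebras with Hilbert
function `{1,2,2,1}`: `A` is isomorphic to exactly one of
`K[[x_1,x_2]]/(x_1^3, x_2^2)` and `K[[x_1,x_2]]/(x_1x_2, x_1^3 - x_2^3)`. -/
theorem classification_hilbert_1221
    {K : Type*} [Field K] [IsAlgClosed K] [CharZero K]
    (A : Type*) [CommRing A] [IsLocalRing A] [Algebra K A] [IsArtinianRing A]
    (hres : residueFieldIsK K A) (hGor : socDimLoc K A = 1)
    (h0 : hilbLoc K A 0 = 1) (h1 : hilbLoc K A 1 = 2) (h2 : hilbLoc K A 2 = 2)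
    (h3 : hilbLoc K A 3 = 1) (hm4 : IsLocalRing.maximalIdeal A ^ 4 = ⊥) :
    Xor'
      (Nonempty (A ≃ₐ[K] (MvPowerSeries (Fin 2) K ⧸
        (Ideal.span {psX 0 ^ 3, psX 1 ^ 2} : Ideal (MvPowerSeries (Fin 2) K)))))
      (Nonempty (A ≃ₐ[K] (MvPowerSeries (Fin 2) K ⧸
        (Ideal.span {psX 0 * psX 1, psX 0 ^ 3 - psX 1 ^ 3} :
          Ideal (MvPowerSeries (Fin 2) K))))) :=
  classification_hilbert_1221_general A hGor h0 h1 h2 h3 hm4
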